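/- Fix m ≥ 1 and let c = c_{m−1} c_{m−2} … c_0 be an OT-admissible word of length m over Fin 8, with position i counted from the right and lexicographic comparison of words performed on positions m−1, m−2, … (leftmost most significant) in the level order 0 < 1 < ⋯ < 7. Let g(c) be the number of OT-admissible words of length m that are lexicographically smaller than c. For each i, let a_i be the level of c_i, and define y_i = (y_{i,1},…,y_{i,5}) ∈ {0,1}⁵ by the FIRST matching rule below, where β1' ranges over {0,1,4}, β2' over {3,6,7}, β3 over {3,6}, β4 over {1,4}, γ1 over {6,7}, γ2 over {4,5}, γ3 over {3,4}, and any condition referring to a position ≥ m is false: (1) (c_{i+2},c_{i+1},c_i) = (β1',β3,2): y_i = (0,1,0,0,0); (2) (c_{i+2},c_{i+1},c_i) = (β1',β3,3): (0,1,1,0,1); (3) (c_{i+2},c_{i+1},c_i) = (β1',β3,γ1): (1,0,1,0,1); (4) (c_{i+2},c_{i+1},c_i) = (β2',β4,γ2): (0,1,0,0,0); (5) (c_{i+1},c_i) = (β1',3): (0,0,1,0,0); (6) (c_{i+1},c_i) = (β1',γ2): (0,1,0,0,1); (7) (c_{i+1},c_i) = (β1',6): (0,1,1,1,0); (8) (c_{i+1},c_i)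 = (β1',7): (1,0,0,1,1); (9) (c_{i+1},c_i) = (β2',2): (0,0,1,0,1); (10) (c_{i+1},c_i) = (β2',γ3): (0,1,0,1,0); (11) (c_{i+1},c_i) = (β2',γ1): (1,0,0,1,1); (12) (c_{i+1},c_i) = (2,2): (0,1,0,0,0); (13) (c_{i+1},c_i) = (2,3): (0,1,1,0,1); (14) (c_{i+1},c_i) = (2,γ1): (1,0,1,0,1); (15) (c_{i+1},c_i) = (5,γ2): (0,1,0,0,0); otherwise (16) if c_i ∈ {0,1,2}: (0,0,0,0,0); (17) if c_i ∈ {3,4,5}: (0,0,1,0,1); (18) if c_i ∈ {6,7}: (0,1,0,1,0). Set θ_{i,1} = 4y_{i,1} + 2y_{i,2} + y_{i,3} and θ_{i,2} = 2y_{i,4} + y_{i,5}. Then, as an identity of rational numbers, g(c) = Σ_{i=0}^{m−1} [ ((a_i − θ_{i,1})/6)·N8(i+1) + ((θ_{i,1} + 3θ_{i,2} − a_i)/6)·N8(i) ]. -/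

import Mathlib

namespace OTLOCO

def B1 : Finset (Fin 8) := {0, 1, 4, 5}
def B2 : Finset (Fin 8) := {2, 3, 6, 7}

def OTpair (a b : Fin 8) : Prop :=
  (a = 2 ∧ b ∈ B1) ∨ (a ∈ B1 ∧ b = 2) ∨ (a = 5 ∧ b ∈ B2) ∨ (a ∈ B2 ∧ b = 5)

def OTtriple (a x b : Fin 8) : Prop :=
  (a ∈ ({0, 1, 4} : Finset (Fin 8)) ∧ x ∈ ({3, 6} : Finset (Fin 8)) ∧
    b ∈ ({0, 1, 4} : Finset (Fin 8))) ∨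
  (a ∈ ({3, 6, 7} : Finset (Fin 8)) ∧ x ∈ ({1, 4} : Finset (Fin 8)) ∧
    b ∈ ({3, 6, 7} : Finset (Fin 8)))

instance (a b : Fin 8) : Decidable (OTpair a b) := by unfold OTpair; infer_instance
instance (a x b : Fin 8) : Decidable (OTtriple a x b) := by unfold OTtriple; infer_instance

/-- Right-indexed OT-admissibility: `c i` is the symbol at position `i` counted from the
right (`c (m−1)` is the leftmost symbol), and forbidden patterns are read left-to-right,
i.e. from higher positions towards lower positions. -/
def OTadmR {m : ℕ} (c : Fin m → Fin 8) : Prop :=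
  (∀ i j : Fin m, (i : ℕ) = (j : ℕ) + 1 → ¬ OTpair (c i) (c j)) ∧
  (∀ i j k : Fin m, (i : ℕ) = (k : ℕ) + 2 → (j : ℕ) = (k : ℕ) + 1 →
    ¬ OTtriple (c i) (c j) (c k))

instance {m : ℕ} : DecidablePred (@OTadmR m) := fun c => by
  unfold OTadmR; infer_instance

/-- Number of OT-admissible words of length `m`, with the convention `N8 0 = 2`. -/
def N8 (m : ℕ) : ℕ :=
  if m = 0 then 2
  else (Finset.univ.filter (fun w : Fin m → Fin 8 => OTadmR w)).card

/-- Lexicographic order on right-indexed words: the leftmost (highest-index) position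
is the most significant, and symbols are compared in the level order `0 < 1 < ⋯ < 7`. -/
def lexLt {m : ℕ} (u v : Fin m → Fin 8) : Prop :=
  ∃ i : Fin m, u i < v i ∧ ∀ j : Fin m, i < j → u j = v j

instance {m : ℕ} (u v : Fin m → Fin 8) : Decidable (lexLt u v) := by
  unfold lexLt; infer_instance

/-- The lexicographic index of `c`: the number of OT-admissible words of length `m`
that are lexicographically smaller than `c`. -/
def gIndex {m : ℕ} (c : Fin m → Fin 8) : ℕ :=
  (Finset.univ.filter (fun w : Fin m → Fin 8 => OTadmR w ∧ lexLt w c)).card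

/-- The symbol at (right-counted) position `k`, or `none` if `k ≥ m`. -/
def copt {m : ℕ} (c : Fin m → Fin 8) (k : ℕ) : Option (Fin 8) :=
  if h : k < m then some (c ⟨k, h⟩) else none

/-- `oin o s` holds when `o = some x` for some `x ∈ s`; in particular any membership
condition on a nonexistent position is false. -/
def oin (o : Option (Fin 8)) (s : Finset (Fin 8)) : Prop := ∃ x ∈ s, o = some x

instance (o : Option (Fin 8)) (s : Finset (Fin 8)) : Decidable (oin o s) := by
  unfold oin; infer_instance

/-- The merging-variable vector `(y₁,y₂,y₃,y₄,y₅)` for a symbol with left context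
`(c_{i+2}, c_{i+1})` (as options) and value `c_i`, given by the first matching rule. -/
def yRule (c2 c1 : Option (Fin 8)) (c0 : Fin 8) : ℕ × ℕ × ℕ × ℕ × ℕ :=
  if oin c2 {0, 1, 4} ∧ oin c1 {3, 6} ∧ c0 = 2 then (0, 1, 0, 0, 0)
  else if oin c2 {0, 1, 4} ∧ oin c1 {3, 6} ∧ c0 = 3 then (0, 1, 1, 0, 1)
  else if oin c2 {0, 1, 4} ∧ oin c1 {3, 6} ∧ c0 ∈ ({6, 7} : Finset (Fin 8)) then
    (1, 0, 1, 0, 1)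
  else if oin c2 {3, 6, 7} ∧ oin c1 {1, 4} ∧ c0 ∈ ({4, 5} : Finset (Fin 8)) then
    (0, 1, 0, 0, 0)
  else if oin c1 {0, 1, 4} ∧ c0 = 3 then (0, 0, 1, 0, 0)
  else if oin c1 {0, 1, 4} ∧ c0 ∈ ({4, 5} : Finset (Fin 8)) then (0, 1, 0, 0, 1)
  else if oin c1 {0, 1, 4} ∧ c0 = 6 then (0, 1, 1, 1, 0)
  else if oin c1 {0, 1, 4} ∧ c0 = 7 then (1, 0, 0, 1, 1)
  else if oin c1 {3, 6, 7} ∧ c0 = 2 then (0, 0, 1, 0, 1)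
  else if oin c1 {3, 6, 7} ∧ c0 ∈ ({3, 4} : Finset (Fin 8)) then (0, 1, 0, 1, 0)
  else if oin c1 {3, 6, 7} ∧ c0 ∈ ({6, 7} : Finset (Fin 8)) then (1, 0, 0, 1, 1)
  else if c1 = some 2 ∧ c0 = 2 then (0, 1, 0, 0, 0)
  else if c1 = some 2 ∧ c0 = 3 then (0, 1, 1, 0, 1)
  else if c1 = some 2 ∧ c0 ∈ ({6, 7} : Finset (Fin 8)) then (1, 0, 1, 0, 1)
  else if c1 = some 5 ∧ c0 ∈ ({4, 5} : Finset (Fin 8)) then (0, 1, 0, 0, 0)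
  else if c0 ∈ ({0, 1, 2} : Finset (Fin 8)) then (0, 0, 0, 0, 0)
  else if c0 ∈ ({3, 4, 5} : Finset (Fin 8)) then (0, 0, 1, 0, 1)
  else (0, 1, 0, 1, 0)

def otY {m : ℕ} (c : Fin m → Fin 8) (i : Fin m) : ℕ × ℕ × ℕ × ℕ × ℕ :=
  yRule (copt c ((i : ℕ) + 2)) (copt c ((i : ℕ) + 1)) (c i)

/-- `θ_{i,1} = 4y_{i,1} + 2y_{i,2} + y_{i,3}`. -/
def otTheta1 {m : ℕ} (c : Fin m → Fin 8) (i : Fin m) : ℕ :=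
  4 * (otY c i).1 + 2 * (otY c i).2.1 + (otY c i).2.2.1

/-- `θ_{i,2} = 2y_{i,4} + y_{i,5}`. -/
def otTheta2 {m : ℕ} (c : Fin m → Fin 8) (i : Fin m) : ℕ :=
  2 * (otY c i).2.2.2.1 + (otY c i).2.2.2.2

def okN : Option (Fin 8) → Option (Fin 8) → Fin 8 → Bool
  | _, none, _ => true
  | none, some b, x => !decide (OTpair b x)
  | some a, some b, x => !decide (OTpair b x) && !decide (OTtriple a b x)

def restr (p : Option (Fin 8)) (x : Fin 8) : Bool :=
  decide (x = 2 ∨ x = 5 ∨ (oin p {0, 1, 4} ∧ x ∈ ({3, 6} : Finset (Fin 8))) ∨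
    (oin p {3, 6, 7} ∧ x ∈ ({1, 4} : Finset (Fin 8))))

def ab : ℕ → ℕ × ℕ
  | 0 => (1, 1)
  | n + 1 => (4 * (ab n).1 + 3 * (ab n).2, 3 * (ab n).1 + (ab n).2)

def ext {n : ℕ} (w : Fin n → Fin 8) (p q : Option (Fin 8)) (k : ℕ) : Option (Fin 8) :=
  if h : k < n then some (w ⟨k, h⟩) else if k = n then q else if k = n + 1 then p else none

def Adm {n : ℕ} (p q : Option (Fin 8)) (w : Fin n → Fin 8) : Prop :=
  ∀ i : Fin n, okN (ext w p q (i + 2)) (ext w p q (i + 1)) (w i) = true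

instance {n : ℕ} (p q : Option (Fin 8)) (w : Fin n → Fin 8) : Decidable (Adm p q w) := by
  unfold Adm; infer_instance

theorem ext_snoc {n : ℕ} (w : Fin n → Fin 8) (x : Fin 8) (p q : Option (Fin 8)) (k : ℕ)
    (hk : k ≤ n + 1) :
    ext (Fin.snoc w x : Fin (n + 1) → Fin 8) p q k = ext w q (some x) k := by
  unfold ext
  rcases lt_trichotomy k n with h | h | h
  · have h' : k < n + 1 := by omega
    simp [h, h', Fin.snoc]
  · subst h
    simp [Fin.snoc]
  · have : k = n + 1 := by omega
    subst this
    simp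

theorem ext_top1 {n : ℕ} (w : Fin n → Fin 8) (p q : Option (Fin 8)) :
    ext w p q n = q := by simp [ext]

theorem ext_top2 {n : ℕ} (w : Fin n → Fin 8) (p q : Option (Fin 8)) :
    ext w p q (n + 1) = p := by simp [ext]

theorem ext_none {n : ℕ} (w : Fin n → Fin 8) (k : ℕ) : ext w none none k = copt w k := by
  simp [ext, copt]

theorem adm_snoc {n : ℕ} (w : Fin n → Fin 8) (x : Fin 8) (p q : Option (Fin 8)) :
    Adm p q (Fin.snoc w x : Fin (n + 1) → Fin 8) ↔
      okN p q x = true ∧ Adm q (some x) w := by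
  unfold Adm
  rw [Fin.forall_fin_succ', and_comm]
  refine and_congr ?_ (forall_congr' fun i => ?_)
  · simp only [Fin.val_last, Fin.snoc_last]
    rw [show n + 2 = (n + 1) + 1 from rfl, ext_top2, ext_top1]
  · have := i.2
    simp only [Fin.val_castSucc, Fin.snoc_castSucc]
    rw [ext_snoc _ _ _ _ _ (by omega), ext_snoc _ _ _ _ _ (by omega)]

theorem adm_none {n : ℕ} (w : Fin n → Fin 8) : OTadmR w ↔ Adm none none w := by
  unfold OTadmR Adm
  simp only [ext_none]
  constructor
  · rintro ⟨h1, h2⟩ i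
    by_cases a1 : (i : ℕ) + 1 < n
    · have H1 := h1 ⟨i + 1, a1⟩ i rfl
      by_cases a2 : (i : ℕ) + 2 < n
      · have H2 := h2 ⟨i + 2, a2⟩ ⟨i + 1, a1⟩ i rfl rfl
        simp [copt, a1, a2, okN, H1, H2]
      · simp [copt, a1, a2, okN, H1]
    · simp [copt, a1, okN]
  · intro h
    constructor
    · rintro ⟨i, hi⟩ j hij
      simp only at hij
      subst hij
      have := h j
      by_cases a2 : (j : ℕ) + 2 < n
      · simp [copt, hi, a2, okN] at this
        exact this.1
      · simpa [copt, hi, a2, okN] using this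
    · rintro ⟨i, hi⟩ ⟨j, hj⟩ k hik hjk
      simp only at hik hjk
      subst hik hjk
      have := h k
      simp [copt, hi, hj, okN] at this
      exact this.2

theorem lexLt_snoc {n : ℕ} (w c : Fin n → Fin 8) (x y : Fin 8) :
    lexLt (Fin.snoc w x : Fin (n + 1) → Fin 8) (Fin.snoc c y : Fin (n + 1) → Fin 8) ↔
      x < y ∨ (x = y ∧ lexLt w c) := by
  unfold lexLt
  rw [Fin.exists_fin_succ', or_comm]
  refine or_congr ?_ ?_
  · simp only [Fin.snoc_last, and_iff_left_iff_imp]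
    intro _ j hj
    exact absurd hj (not_lt.mpr (Fin.le_last j))
  · simp only [Fin.forall_fin_succ', Fin.snoc_castSucc, Fin.snoc_last,
      Fin.castSucc_lt_castSucc_iff, Fin.castSucc_lt_last, true_imp_iff]
    tauto

def T (n : ℕ) (p q : Option (Fin 8)) : ℕ :=
  ∑ w : Fin n → Fin 8, if Adm p q w then 1 else 0

def L {n : ℕ} (p q : Option (Fin 8)) (c : Fin n → Fin 8) : ℕ :=
  ∑ w : Fin n → Fin 8, if Adm p q w ∧ lexLt w c then 1 else 0

theorem sum_snoc {n : ℕ} (f : (Fin (n + 1) → Fin 8) → ℕ) :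
    ∑ w, f w = ∑ x : Fin 8, ∑ w : Fin n → Fin 8, f (Fin.snoc w x : Fin (n + 1) → Fin 8) := by
  rw [← (Fin.snocEquiv (fun _ : Fin (n + 1) => Fin 8)).sum_comp, Fintype.sum_prod_type]
  rfl

theorem T_succ (n : ℕ) (p q : Option (Fin 8)) :
    T (n + 1) p q = ∑ x : Fin 8, if okN p q x = true then T n q (some x) else 0 := by
  unfold T
  rw [sum_snoc]
  refine Finset.sum_congr rfl fun x _ => ?_
  simp only [adm_snoc]
  split_ifs with h <;> simp [h]

theorem sum_ab (P : Fin 8 → Prop) [DecidablePred P] (q : Option (Fin 8)) (a b : ℕ) :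
    (∑ x : Fin 8, if P x then (if restr q x = true then b else a) else 0) =
      (Finset.univ.filter (fun x => P x ∧ restr q x = false)).card * a +
      (Finset.univ.filter (fun x => P x ∧ restr q x = true)).card * b := by
  simp only [Finset.card_filter, Finset.sum_mul, ← Finset.sum_add_distrib]
  refine Finset.sum_congr rfl fun x _ => ?_
  by_cases h : P x <;> cases h' : restr q x <;> simp [h]

theorem cnt_step : ∀ (p : Option (Fin 8)) (x : Fin 8),
    (Finset.univ.filter (fun y => okN p (some x) y = true ∧ restr (some x) y = false)).card
      = (if restr p x = true then 3 else 4) ∧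
    (Finset.univ.filter (fun y => okN p (some x) y = true ∧ restr (some x) y = true)).card
      = (if restr p x = true then 1 else 3) := by
  decide +kernel

theorem T_eq (n : ℕ) : ∀ (p : Option (Fin 8)) (x : Fin 8),
    T n p (some x) = if restr p x = true then (ab n).2 else (ab n).1 := by
  induction n with
  | zero => intro p x; simp [T, ab, Adm]
  | succ n ih =>
    intro p x
    rw [T_succ]
    simp only [ih]
    rw [sum_ab, (cnt_step p x).1, (cnt_step p x).2]
    split_ifs <;> simp [ab]

theorem cnt_none :
    (Finset.univ.filter (fun y => okN none none y = true ∧ restr none y = false)).card = 6 ∧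
    (Finset.univ.filter (fun y => okN none none y = true ∧ restr none y = true)).card = 2 := by
  decide +kernel

theorem N8_eq (n : ℕ) : N8 n = 2 * (ab n).2 := by
  cases n with
  | zero => simp [N8, ab]
  | succ n =>
    have : N8 (n + 1) = T (n + 1) none none := by
      simp only [N8, T, Finset.card_filter, adm_none]
      simp
    rw [this, T_succ]
    simp only [T_eq]
    rw [sum_ab, cnt_none.1, cnt_none.2]
    simp only [ab]
    ring

def th1 (p q : Option (Fin 8)) (x : Fin 8) : ℕ :=
  4 * (yRule p q x).1 + 2 * (yRule p q x).2.1 + (yRule p q x).2.2.1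

def th2 (p q : Option (Fin 8)) (x : Fin 8) : ℕ :=
  2 * (yRule p q x).2.2.2.1 + (yRule p q x).2.2.2.2

theorem cnt_lt : ∀ (p q : Option (Fin 8)) (x : Fin 8), okN p q x = true →
    (Finset.univ.filter (fun y => (y < x ∧ okN p q y = true) ∧ restr q y = false)).card
      + th1 p q x = (x : ℕ) ∧
    (Finset.univ.filter (fun y => (y < x ∧ okN p q y = true) ∧ restr q y = true)).card
      = th2 p q x := by
  decide +kernel

def term (n : ℕ) (p q : Option (Fin 8)) (x : Fin 8) : ℚ :=
  (((x : ℕ) : ℚ) - (th1 p q x : ℚ)) / 6 * (N8 (n + 1) : ℚ) +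
    (((th1 p q x : ℚ) + 3 * (th2 p q x : ℚ) - ((x : ℕ) : ℚ)) / 6) * (N8 n : ℚ)

theorem term_eq (n : ℕ) (p q : Option (Fin 8)) (x : Fin 8) (h : okN p q x = true) :
    ((∑ y : Fin 8, if y < x ∧ okN p q y = true then T n q (some y) else 0 : ℕ) : ℚ)
      = term n p q x := by
  simp only [T_eq]
  rw [sum_ab]
  obtain ⟨h1, h2⟩ := cnt_lt p q x h
  rw [h2]
  unfold term
  rw [N8_eq, N8_eq, ← h1]
  simp only [ab]
  push_cast
  ring

theorem L_succ {n : ℕ} (p q : Option (Fin 8)) (c : Fin n → Fin 8) (x : Fin 8)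
    (h : okN p q x = true) :
    L p q (Fin.snoc c x : Fin (n + 1) → Fin 8) =
      (∑ y : Fin 8, if y < x ∧ okN p q y = true then T n q (some y) else 0) +
        L q (some x) c := by
  have e : L q (some x) c = ∑ y : Fin 8, if y = x then L q (some y) c else 0 := by simp
  rw [e, ← Finset.sum_add_distrib]
  unfold L T
  rw [sum_snoc]
  refine Finset.sum_congr rfl fun y _ => ?_
  simp only [adm_snoc, lexLt_snoc]
  rcases lt_trichotomy y x with hy | hy | hy
  · by_cases ho : okN p q y = true <;> simp [hy, hy.ne, ho]
  · subst hy
    simp [h]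
  · simp [hy.not_gt, hy.ne']

theorem L_eq (n : ℕ) : ∀ (p q : Option (Fin 8)) (c : Fin n → Fin 8), Adm p q c →
    (L p q c : ℚ) =
      ∑ i : Fin n, term i (ext c p q (i + 2)) (ext c p q (i + 1)) (c i) := by
  induction n with
  | zero => intro p q c _; simp [L, lexLt]
  | succ n ih =>
    intro p q c hc
    obtain ⟨x, c, rfl⟩ : ∃ (x : Fin 8) (d : Fin n → Fin 8), c = Fin.snoc d x :=
      ⟨c (Fin.last n), Fin.init c, (Fin.snoc_init_self c).symm⟩
    obtain ⟨h1, h2⟩ := (adm_snoc _ _ _ _).1 hc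
    rw [L_succ _ _ _ _ h1, Nat.cast_add, term_eq _ _ _ _ h1, ih _ _ _ h2,
      Fin.sum_univ_castSucc, add_comm]
    congr 1
    · refine Finset.sum_congr rfl fun i _ => ?_
      have := i.2
      simp only [Fin.val_castSucc, Fin.snoc_castSucc]
      rw [ext_snoc _ _ _ _ _ (by omega), ext_snoc _ _ _ _ _ (by omega)]
    · simp only [Fin.val_last, Fin.snoc_last]
      rw [show n + 2 = (n + 1) + 1 from rfl, ext_top2, ext_top1]

theorem ot_encoding_decoding_rule (m : ℕ) (hm : 1 ≤ m) (c : Fin m → Fin 8)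
    (hc : OTadmR c) :
    (gIndex c : ℚ) =
      ∑ i : Fin m,
        ((((c i : ℕ) : ℚ) - (otTheta1 c i : ℚ)) / 6 * (N8 ((i : ℕ) + 1) : ℚ) +
          (((otTheta1 c i : ℚ) + 3 * (otTheta2 c i : ℚ) - ((c i : ℕ) : ℚ)) / 6) *
            (N8 (i : ℕ) : ℚ)) := by
  have hg : gIndex c = L none none c := by
    simp only [gIndex, L, Finset.card_filter, adm_none]
  rw [hg, L_eq m none none c ((adm_none c).1 hc)]
  refine Finset.sum_congr rfl fun i _ => ?_
  simp only [ext_none]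
  rfl

end OTLOCO
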